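/- arXiv:1910.02794 — 3 statements merged into one kernel-verified Lean document; each statement's English description precedes it below -/
import Mathlib

section
/- Let G be a finite simple graph whose vertex set carries a linear order, let r ∈ ℕ, suppose G has girth at least 4r+3, let M be a distance-r dominating set of G, and let H_m be the Voronoi cells under the covering map. Then for any two distinct m, n ∈ M there is at most one edge of G having one endpoint in H_m and the other endpoint in H_n. -/
open SimpleGraph

/-- `M` is a distance-`r` dominating set of `G`: every vertex is within graph
distance `r` of some vertex of `M` (expressed via a walk of length `≤ r`). -/
def IsDistDomSet {V : Type*} (G : SimpleGraph V) (r : ℕ) (M : Set V) : Prop :=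
  ∀ v : V, ∃ m ∈ M, ∃ p : G.Walk v m, p.length ≤ r

/-- `c` is the covering map of `M`: it sends each vertex `v` to the vertex `m ∈ M`
minimizing the pair `(dist v m, m)` lexicographically (distance to unreachable
vertices being infinite, so only reachable members of `M` compete). -/
def IsVoronoiCovering {V : Type*} [LinearOrder V] (G : SimpleGraph V) (M : Set V)
    (c : V → V) : Prop :=
  ∀ v : V, c v ∈ M ∧ G.Reachable v (c v) ∧
    ∀ m ∈ M, G.Reachable v m →
      G.dist v (c v) < G.dist v m ∨ (G.dist v (c v) = G.dist v m ∧ c v ≤ m)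

/-! The covering map is constant along every geodesic from a vertex to its center, because a better
center for a vertex of the geodesic would also be a better center for its starting point. So two
vertices of the same cell are joined by a walk of length at most `2 * r` inside that cell. Two
distinct edges between the disjoint cells of `m` and `n` would be closed up by two such walks,
giving a cycle of length at most `2 * r + 2 * r + 2`. -/

section Girth

variable {V : Type*} {G : SimpleGraph V} {u v s t : V}

theorem egirth_le_length_add_one_of_notMem_edges (huv : G.Adj u v) (p : G.Walk v u)
    (hp : s(u, v) ∉ p.edges) : G.egirth ≤ (p.length + 1 : ℕ) := by
  classical
  have hcycle : (Walk.cons huv p.bypass).IsCycle :=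
    (Walk.cons_isCycle_iff _ huv).2
      ⟨p.bypass_isPath, fun h ↦ hp (p.edges_bypass_subset_edges h)⟩
  calc G.egirth ≤ (Walk.cons huv p.bypass).length := egirth_le_length hcycle
    _ ≤ (p.length + 1 : ℕ) := by
      rw [Walk.length_cons]
      gcongr
      exact p.length_bypass_le_length

theorem eq_and_eq_of_disjoint_support_of_lt_egirth (huv : G.Adj u v) (hst : G.Adj s t)
    (p : G.Walk s u) (q : G.Walk v t) (hpq : p.support.Disjoint q.support)
    (hlt : (p.length + q.length + 2 : ℕ) < G.egirth) : u = s ∧ v = t := by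
  by_contra hne
  let w : G.Walk v u := q.append (.cons hst.symm p)
  have hw : s(u, v) ∉ w.edges := by
    simp only [w, Walk.edges_append, Walk.edges_cons, List.mem_append, List.mem_cons, not_or]
    refine ⟨fun h ↦ ?_, fun h ↦ ?_, fun h ↦ ?_⟩
    · exact hpq p.end_mem_support (q.fst_mem_support_of_mem_edges h)
    · rcases Sym2.eq_iff.1 h with ⟨rfl, -⟩ | h
      · exact hpq p.end_mem_support q.end_mem_support
      · exact hne h
    · exact hpq (p.snd_mem_support_of_mem_edges h) q.start_mem_support
  have hlen : w.length + 1 = p.length + q.length + 2 := by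
    simp only [w, Walk.length_append, Walk.length_cons]
    omega
  exact (hlen ▸ egirth_le_length_add_one_of_notMem_edges huv w hw).not_gt hlt

end Girth

namespace IsVoronoiCovering

variable {V : Type*} [LinearOrder V] {G : SimpleGraph V} {r : ℕ} {M : Set V} {c : V → V}
  {u v m : V}

theorem dist_apply_le (hc : IsVoronoiCovering G M c) (hm : m ∈ M) (hvm : G.Reachable v m) :
    G.dist v (c v) ≤ G.dist v m :=
  ((hc v).2.2 m hm hvm).elim le_of_lt fun h ↦ h.1.le

theorem apply_le_of_dist_le (hc : IsVoronoiCovering G M c) (hm : m ∈ M) (hvm : G.Reachable v m)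
    (hdist : G.dist v m ≤ G.dist v (c v)) : c v ≤ m :=
  ((hc v).2.2 m hm hvm).elim (fun h ↦ absurd h hdist.not_gt) And.right

theorem dist_apply_le_of_isDistDomSet (hc : IsVoronoiCovering G M c) (hdom : IsDistDomSet G r M)
    (v : V) : G.dist v (c v) ≤ r := by
  obtain ⟨m, hm, p, hp⟩ := hdom v
  exact (hc.dist_apply_le hm p.reachable).trans ((dist_le p).trans hp)

theorem apply_eq_of_mem_support_of_length_eq_dist (hc : IsVoronoiCovering G M c)
    {p : G.Walk u (c u)} (hp : p.length = G.dist u (c u)) {w : V} (hw : w ∈ p.support) :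
    c w = c u := by
  classical
  obtain ⟨hwM, hwr, -⟩ := hc w
  have hsplit : G.dist u w + G.dist w (c u) ≤ G.dist u (c u) :=
    calc G.dist u w + G.dist w (c u)
      _ ≤ (p.takeUntil w hw).length + (p.dropUntil w hw).length :=
        add_le_add (dist_le _) (dist_le _)
      _ = p.length := by rw [← Walk.length_append, p.take_spec]
      _ = G.dist u (c u) := hp
  have huw : G.Reachable u w := (p.takeUntil w hw).reachable
  have hwu : G.Reachable w (c u) := (p.dropUntil w hw).reachable
  have htri : G.dist u (c w) ≤ G.dist u w + G.dist w (c w) := huw.dist_triangle_left _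
  have hle_w : G.dist w (c w) ≤ G.dist w (c u) := hc.dist_apply_le (hc u).1 hwu
  have hle_u : G.dist u (c u) ≤ G.dist u (c w) := hc.dist_apply_le hwM (huw.trans hwr)
  exact le_antisymm (hc.apply_le_of_dist_le (hc u).1 hwu (by omega))
    (hc.apply_le_of_dist_le hwM (huw.trans hwr) (by omega))

theorem exists_walk_to_center (hc : IsVoronoiCovering G M c) (hdom : IsDistDomSet G r M) (u : V) :
    ∃ p : G.Walk u (c u), p.length ≤ r ∧ ∀ w ∈ p.support, c w = c u := by
  obtain ⟨p, hp⟩ := (hc u).2.1.exists_walk_length_eq_dist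
  exact ⟨p, hp.trans_le (hc.dist_apply_le_of_isDistDomSet hdom u),
    fun w hw ↦ hc.apply_eq_of_mem_support_of_length_eq_dist hp hw⟩

theorem exists_walk_of_apply_eq (hc : IsVoronoiCovering G M c) (hdom : IsDistDomSet G r M)
    (hu : c u = m) (hv : c v = m) :
    ∃ p : G.Walk u v, p.length ≤ 2 * r ∧ ∀ w ∈ p.support, c w = m := by
  obtain ⟨p, hpr, hp⟩ := hu ▸ hc.exists_walk_to_center hdom u
  obtain ⟨q, hqr, hq⟩ := hv ▸ hc.exists_walk_to_center hdom v
  refine ⟨p.append q.reverse, ?_, fun w hw ↦ ?_⟩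
  · rw [Walk.length_append, Walk.length_reverse]
    omega
  · rw [Walk.mem_support_append_iff, Walk.support_reverse, List.mem_reverse] at hw
    exact hw.elim (hp w) (hq w)

end IsVoronoiCovering

theorem stmt2_general {V : Type*} [LinearOrder V] (G : SimpleGraph V) (r : ℕ)
    (hgirth : ((4 * r + 3 : ℕ) : ℕ∞) ≤ G.egirth)
    (M : Set V) (hdom : IsDistDomSet G r M) (c : V → V) (hc : IsVoronoiCovering G M c)
    (m n : V) (hmn : m ≠ n) :
    ∀ u v s t : V, G.Adj u v → G.Adj s t →
      c u = m → c v = n → c s = m → c t = n → u = s ∧ v = t := by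
  intro u v s t huv hst hu hv hs ht
  obtain ⟨p, hpr, hp⟩ := hc.exists_walk_of_apply_eq hdom hs hu
  obtain ⟨q, hqr, hq⟩ := hc.exists_walk_of_apply_eq hdom hv ht
  have hpq : p.support.Disjoint q.support :=
    fun w hwp hwq ↦ hmn ((hp w hwp).symm.trans (hq w hwq))
  have hlt : (p.length + q.length + 2 : ℕ) < G.egirth :=
    (Nat.cast_lt.2 (by omega)).trans_le hgirth
  exact eq_and_eq_of_disjoint_support_of_lt_egirth huv hst p q hpq hlt

/-- If `G` has girth at least `4r+3`, then for any two distinct `m, n ∈ M` there is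
at most one edge of `G` with one endpoint in the Voronoi cell `H_m` and the other
in `H_n`. -/
theorem stmt2 {V : Type*} [Fintype V] [LinearOrder V] (G : SimpleGraph V) (r : ℕ)
    (hgirth : ((4 * r + 3 : ℕ) : ℕ∞) ≤ G.egirth)
    (M : Set V) (hdom : IsDistDomSet G r M) (c : V → V) (hc : IsVoronoiCovering G M c)
    (m n : V) (hm : m ∈ M) (hn : n ∈ M) (hmn : m ≠ n) :
    ∀ u v s t : V, G.Adj u v → G.Adj s t →
      c u = m → c v = n → c s = m → c t = n → u = s ∧ v = t :=
  stmt2_general G r hgirth M hdom c hc m n hmn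
end

section
/- Let G be a finite simple connected graph whose vertex set carries a linear order, let r ≥ 1, suppose G has girth at least 4r+3, and let M be a distance-r dominating set of G such that no single vertex of G forms a distance-r dominating set. Let c be the covering map with Voronoi cells H_m, and for m ∈ M let T_m ⊆ H_m be the set of vertices lying on some shortest path inside the subgraph induced by H_m from m to a vertex u ∈ H_m that has a neighbor outside H_m. Suppose u and v are vertices with c(u) = c(v) = m and dist(u,v) ≤ r, and v is the lexicographic maximum of the pairs (|N^r(w)|, w) over all w ∈ N^r[u]. Then v ∈ T_m. -/
open SimpleGraph

/-! The shadow of `v` as seen from `m` is the set of vertices having a geodesic from `m` through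
`v`. If `v` lies in the cell of `m` but not in `T_m`, no geodesic from `m` through `v` can leave
the cell, so the cell contains the whole shadow of `v`; in particular the shadow has radius at
most `r` about `m`, and `v ≠ m` because `m` alone does not dominate. Within that radius the girth
makes geodesics from `m` unique and forbids edges between vertices at equal distance from `m`, so
the only edge leaving the shadow joins `v` to its predecessor `t`. Every path out of the shadow
thus passes through `t`, whence `N^r[v] ⊆ N^r[t]`. As `t` alone does not dominate either, some
vertex outside the shadow is at distance exactly `r` from `t`, hence `r + 1` from `v`, and the
inclusion is strict. -/

section Geodesics

variable {V : Type*} {G : SimpleGraph V} {a b m v x y z : V} {r : ℕ}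

theorem mem_ball_add_one_iff_dist_le (hconn : G.Connected) :
    x ∈ G.ball v (r + 1) ↔ G.dist x v ≤ r := by
  rw [SimpleGraph.mem_ball, ← (hconn x v).coe_dist_eq_edist]
  norm_cast
  exact Nat.lt_succ_iff

theorem dist_add_dist_of_mem_support {p : G.Walk a b} (hp : p.length = G.dist a b)
    (hz : z ∈ p.support) : G.dist a z + G.dist z b = G.dist a b := by
  classical
  rw [← length_eq_dist_of_subwalk hp (p.isSubwalk_takeUntil hz),
    ← length_eq_dist_of_subwalk hp (p.isSubwalk_dropUntil hz),
    ← Walk.length_append, p.take_spec, hp]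

theorem exists_dist_eq_of_le_dist (hab : G.Reachable a b) {k : ℕ} (hk : k ≤ G.dist a b) :
    ∃ z, G.dist a z = k ∧ G.dist a z + G.dist z b = G.dist a b := by
  obtain ⟨p, hp⟩ := hab.exists_walk_length_eq_dist
  refine ⟨p.getVert k, ?_, dist_add_dist_of_mem_support hp (p.getVert_mem_support k)⟩
  rw [← length_eq_dist_of_subwalk hp (p.isSubwalk_take k), Walk.take_length, hp, min_eq_left hk]

theorem exists_adj_dist_add_one_eq (hmv : G.Reachable m v) (hne : m ≠ v) :
    ∃ t, G.Adj v t ∧ G.dist m t + 1 = G.dist m v := by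
  have hpos : 0 < G.dist m v := hmv.pos_dist_of_ne hne
  obtain ⟨t, hmt, htv⟩ := exists_dist_eq_of_le_dist hmv (Nat.sub_le (G.dist m v) 1)
  exact ⟨t, (dist_eq_one_iff_adj.1 (by omega)).symm, by omega⟩

theorem isPath_unique_of_length_add_length_lt_egirth {p q : G.Walk a b} (hp : p.IsPath)
    (hq : q.IsPath) (hlt : ((p.length + q.length : ℕ) : ℕ∞) < G.egirth) : p = q := by
  by_contra hne
  obtain ⟨_, -, -, w, hw, hlen⟩ := hp.exists_isCycle_length_le_add_of_ne hq hne
  exact hlt.not_ge ((egirth_le_length hw).trans (by exact_mod_cast hlen))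

theorem eq_of_adj_of_dist_add_one_eq (hgirth : ((2 * G.dist m x : ℕ) : ℕ∞) < G.egirth)
    (hyx : G.Adj y x) (hzx : G.Adj z x) (hy : G.dist m y + 1 = G.dist m x)
    (hz : G.dist m z + 1 = G.dist m x) : y = z := by
  have hmx : G.Reachable m x := .of_dist_ne_zero (by omega)
  obtain ⟨p, hp⟩ := (hmx.trans hyx.symm.reachable).exists_walk_length_eq_dist
  obtain ⟨q, hq⟩ := (hmx.trans hzx.symm.reachable).exists_walk_length_eq_dist
  have hp' : (p.concat hyx).length = G.dist m x := by rw [Walk.length_concat, hp, hy]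
  have hq' : (q.concat hzx).length = G.dist m x := by rw [Walk.length_concat, hq, hz]
  have heq : p.concat hyx = q.concat hzx :=
    isPath_unique_of_length_add_length_lt_egirth (Walk.isPath_of_length_eq_dist _ hp')
      (Walk.isPath_of_length_eq_dist _ hq') (by rwa [hp', hq', ← two_mul])
  simpa only [Walk.penultimate_concat] using congrArg Walk.penultimate heq

theorem dist_ne_dist_of_adj (hmx : G.Reachable m x)
    (hgirth : ((2 * G.dist m x + 1 : ℕ) : ℕ∞) < G.egirth) (hxy : G.Adj x y) :
    G.dist m x ≠ G.dist m y := by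
  intro heq
  obtain ⟨p, hp⟩ := hmx.exists_walk_length_eq_dist
  obtain ⟨q, hq⟩ := (hmx.trans hxy.reachable).exists_walk_length_eq_dist
  have hy : y ∉ p.support := fun hy => by
    have hadd := dist_add_dist_of_mem_support hp hy
    have hone : G.dist y x = 1 := dist_eq_one_iff_adj.2 hxy.symm
    omega
  have hpq : p.concat hxy = q :=
    isPath_unique_of_length_add_length_lt_egirth ((p.isPath_of_length_eq_dist hp).concat hy hxy)
      (q.isPath_of_length_eq_dist hq)
      (by rwa [Walk.length_concat, hp, hq, ← heq, add_right_comm, ← two_mul])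
  have hlen := congrArg Walk.length hpq
  rw [Walk.length_concat] at hlen
  omega

end Geodesics

section Shadow

variable {V : Type*} {G : SimpleGraph V} {a b m t v x y z : V} {r : ℕ}

/-- The shadow of `v` seen from `m`: the vertices `x` such that some shortest path from `m` to `x`
passes through `v`, i.e. the descendants of `v` when geodesics from `m` are unique. It is encoded by
equality in the triangle inequality, which expresses this only when `G` is connected. -/
def geodesicShadow (G : SimpleGraph V) (m v : V) : Set V :=
  {x | G.dist m v + G.dist v x = G.dist m x}

theorem mem_geodesicShadow : x ∈ geodesicShadow G m v ↔ G.dist m v + G.dist v x = G.dist m x :=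
  Iff.rfl

theorem geodesicShadow_self : geodesicShadow G m m = Set.univ := by
  ext x
  simp [mem_geodesicShadow]

theorem self_mem_geodesicShadow : v ∈ geodesicShadow G m v := by
  simp [mem_geodesicShadow]

theorem mem_geodesicShadow_of_mem_of_mem (hconn : G.Connected) (hx : x ∈ geodesicShadow G m v)
    (hxz : x ∈ geodesicShadow G v z) : z ∈ geodesicShadow G m v := by
  rw [mem_geodesicShadow] at *
  have hmx : G.dist m x ≤ G.dist m z + G.dist z x := hconn.dist_triangle
  have hmz : G.dist m z ≤ G.dist m v + G.dist v z := hconn.dist_triangle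
  omega

theorem eq_and_dist_add_one_eq_of_adj_of_notMem_geodesicShadow (hconn : G.Connected)
    (hgirth : ((2 * G.dist m x + 1 : ℕ) : ℕ∞) < G.egirth) (hx : x ∈ geodesicShadow G m v)
    (hy : y ∉ geodesicShadow G m v) (hxy : G.Adj x y) :
    x = v ∧ G.dist m y + 1 = G.dist m v := by
  have hyx : G.dist m y + 1 = G.dist m x := by
    have hlevel := dist_ne_dist_of_adj (hconn m x) hgirth hxy
    have hone : G.dist x y = 1 := dist_eq_one_iff_adj.2 hxy
    have hone' : G.dist y x = 1 := dist_eq_one_iff_adj.2 hxy.symm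
    have hmx : G.dist m x ≤ G.dist m y + G.dist y x := hconn.dist_triangle
    have hmy : G.dist m y ≤ G.dist m v + G.dist v y := hconn.dist_triangle
    have hvy : G.dist v y ≤ G.dist v x + G.dist x y := hconn.dist_triangle
    rw [mem_geodesicShadow] at hx hy
    omega
  suffices hxv : x = v from ⟨hxv, hxv ▸ hyx⟩
  by_contra hxv
  obtain ⟨s, hxs, hs⟩ := exists_adj_dist_add_one_eq (hconn v x) (Ne.symm hxv)
  have hsx : G.dist s x = 1 := dist_eq_one_iff_adj.2 hxs.symm
  have hsv : s ∈ geodesicShadow G m v :=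
    mem_geodesicShadow_of_mem_of_mem hconn hx (by rw [mem_geodesicShadow, hsx, hs])
  have hsm : G.dist m s + 1 = G.dist m x := by
    rw [mem_geodesicShadow] at hx hsv
    omega
  have hys : y = s := eq_of_adj_of_dist_add_one_eq
    (lt_of_le_of_lt (by norm_cast; omega) hgirth) hxy.symm hxs.symm hyx hsm
  exact hy (hys ▸ hsv)

theorem dist_lt_dist_of_mem_of_notMem_geodesicShadow (hconn : G.Connected)
    (hgirth : ((2 * r + 2 : ℕ) : ℕ∞) ≤ G.egirth) (hS : ∀ x ∈ geodesicShadow G m v, G.dist m x ≤ r)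
    (hvt : G.Adj v t) (ht : G.dist m t + 1 = G.dist m v) (ha : a ∈ geodesicShadow G m v)
    (hb : b ∉ geodesicShadow G m v) : G.dist t b < G.dist a b := by
  have hshort {x : V} (hx : x ∈ geodesicShadow G m v) :
      ((2 * G.dist m x + 1 : ℕ) : ℕ∞) < G.egirth :=
    lt_of_lt_of_le (by have := hS x hx; norm_cast; omega) hgirth
  obtain ⟨p, hp⟩ := hconn.exists_walk_length_eq_dist a b
  obtain ⟨d, hd, hfst, hsnd⟩ := p.exists_boundary_dart _ ha hb
  obtain ⟨hdv, hdm⟩ := eq_and_dist_add_one_eq_of_adj_of_notMem_geodesicShadow hconn (hshort hfst)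
    hfst hsnd d.adj
  have hdt : d.snd = t := eq_of_adj_of_dist_add_one_eq
    (lt_of_le_of_lt (by norm_cast; omega) (hshort self_mem_geodesicShadow))
    (hdv ▸ d.adj.symm) hvt.symm hdm ht
  have htp : t ∈ p.support := hdt ▸ p.dart_snd_mem_support_of_mem_darts hd
  have hat : a ≠ t := fun h => hsnd (hdt ▸ h ▸ ha)
  have hpos : 0 < G.dist a t := hconn.pos_dist_of_ne hat
  have hadd := dist_add_dist_of_mem_support hp htp
  omega

theorem ball_ssubset_ball_of_geodesicShadow (hconn : G.Connected)
    (hgirth : ((2 * r + 2 : ℕ) : ℕ∞) ≤ G.egirth) (hS : ∀ x ∈ geodesicShadow G m v, G.dist m x ≤ r)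
    (hvt : G.Adj v t) (ht : G.dist m t + 1 = G.dist m v) (hfar : ∃ x, r < G.dist t x) :
    G.ball v (r + 1) ⊂ G.ball t (r + 1) := by
  have hexit {a b : V} (ha : a ∈ geodesicShadow G m v) (hb : b ∉ geodesicShadow G m v) :
      G.dist t b < G.dist a b :=
    dist_lt_dist_of_mem_of_notMem_geodesicShadow hconn hgirth hS hvt ht ha hb
  have hnear {x : V} (hx : x ∈ geodesicShadow G m v) : G.dist t x ≤ r := by
    have hmx := hS x hx
    have hone : G.dist t v = 1 := dist_eq_one_iff_adj.2 hvt.symm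
    have htri : G.dist t x ≤ G.dist t v + G.dist v x := hconn.dist_triangle
    rw [mem_geodesicShadow] at hx
    omega
  refine Set.ssubset_iff_exists.2 ⟨fun x hx => ?_, ?_⟩
  · rw [mem_ball_add_one_iff_dist_le hconn, dist_comm] at hx ⊢
    by_cases hxS : x ∈ geodesicShadow G m v
    · exact hnear hxS
    · exact ((hexit self_mem_geodesicShadow hxS).trans_le hx).le
  · obtain ⟨x, hx⟩ := hfar
    obtain ⟨y, hty, htyx⟩ := exists_dist_eq_of_le_dist (hconn t x) hx.le
    have hxS : x ∉ geodesicShadow G m v := fun h => (hnear h).not_gt hx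
    have hyS : y ∉ geodesicShadow G m v := fun h => by
      have := hexit h hxS
      omega
    have hvy : r < G.dist v y := hty ▸ hexit self_mem_geodesicShadow hyS
    refine ⟨y, ?_, ?_⟩ <;> rw [mem_ball_add_one_iff_dist_le hconn, dist_comm]
    exacts [hty.le, hvy.not_ge]

end Shadow

section Domination

variable {V : Type*} {G : SimpleGraph V} {r : ℕ}

theorem isDistDomSet_singleton_iff (hconn : G.Connected) {x : V} :
    IsDistDomSet G r {x} ↔ ∀ y, G.dist x y ≤ r := by
  refine forall_congr' fun y => ?_
  simp only [Set.mem_singleton_iff, exists_eq_left, dist_comm (u := x)]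
  refine ⟨fun ⟨p, hp⟩ => (dist_le p).trans hp, fun h => ?_⟩
  obtain ⟨p, hp⟩ := hconn.exists_walk_length_eq_dist y x
  exact ⟨p, hp.trans_le h⟩

theorem not_ball_ssubset_of_forall_ncard_le [Finite V] (hconn : G.Connected) {u v : V}
    (huv : G.dist u v ≤ r)
    (hmax : ∀ w, G.dist u w ≤ r →
      {x | G.dist x w ≤ r ∧ x ≠ w}.ncard ≤ {x | G.dist x v ≤ r ∧ x ≠ v}.ncard) (w : V) :
    ¬ G.ball v (r + 1) ⊂ G.ball w (r + 1) := by
  intro hlt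
  have hcard (w : V) : {x | G.dist x w ≤ r ∧ x ≠ w}.ncard + 1 = (G.ball w (r + 1)).ncard := by
    rw [← Set.ncard_sdiff_singleton_add_one (SimpleGraph.mem_ball_self (by simp)) (Set.toFinite _)]
    congr 2
    ext x
    simp [mem_ball_add_one_iff_dist_le hconn]
  have huw : G.dist u w ≤ r := (mem_ball_add_one_iff_dist_le hconn).1
    (hlt.subset ((mem_ball_add_one_iff_dist_le hconn).2 huv))
  have hncard := Set.ncard_lt_ncard hlt
  rw [← hcard, ← hcard] at hncard
  exact (hmax w huw).not_gt (Nat.lt_of_add_lt_add_right hncard)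

end Domination

section Voronoi

variable {V : Type*} {G : SimpleGraph V} {c : V → V} {m v x y : V} {r : ℕ}

/-- The set `T_m`: the vertices lying on a shortest path, inside the cell `c ⁻¹' {m}`, from `m` to
a vertex of the cell with a neighbor outside it. Walks whose support lies in the cell stand for
walks of the induced subgraph. -/
def boundaryTree (G : SimpleGraph V) (c : V → V) (m : V) : Set V :=
  {v | ∃ u : V, c u = m ∧ (∃ y : V, G.Adj u y ∧ c y ≠ m) ∧
    ∃ p : G.Walk m u, (∀ x ∈ p.support, c x = m) ∧
      (∀ q : G.Walk m u, (∀ x ∈ q.support, c x = m) → p.length ≤ q.length) ∧ v ∈ p.support}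

variable [LinearOrder V] {M : Set V}

theorem IsVoronoiCovering.dist_le (hc : IsVoronoiCovering G M c) (hdom : IsDistDomSet G r M)
    (x : V) : G.dist (c x) x ≤ r := by
  obtain ⟨m, hm, p, hp⟩ := hdom x
  rw [dist_comm]
  have hmin : G.dist x (c x) ≤ G.dist x m :=
    ((hc x).2.2 m hm p.reachable).elim le_of_lt (·.1.le)
  exact hmin.trans ((SimpleGraph.dist_le p).trans hp)

theorem IsVoronoiCovering.eq_of_mem_geodesicShadow (hc : IsVoronoiCovering G M c)
    (hconn : G.Connected) (hx : x ∈ geodesicShadow G (c x) v) : c v = c x := by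
  rw [mem_geodesicShadow] at hx
  have hxmin := (hc x).2.2 (c v) (hc v).1 (hconn x (c v))
  have hvmin := (hc v).2.2 (c x) (hc x).1 (hconn v (c x))
  have htri : G.dist x (c v) ≤ G.dist x v + G.dist v (c v) := hconn.dist_triangle
  rw [dist_comm (u := c x) (v := v), dist_comm (u := v) (v := x), dist_comm (u := c x)] at hx
  have hvle : G.dist v (c v) ≤ G.dist v (c x) := hvmin.elim le_of_lt (·.1.le)
  exact le_antisymm (hvmin.elim (fun h => by omega) And.right)
    (hxmin.elim (fun h => by omega) And.right)

theorem IsVoronoiCovering.mem_boundaryTree_of_adj (hc : IsVoronoiCovering G M c)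
    (hconn : G.Connected) (hxv : x ∈ geodesicShadow G (c x) v) (hxy : G.Adj x y)
    (hy : c y ≠ c x) : v ∈ boundaryTree G c (c x) := by
  obtain ⟨p, hp⟩ := hconn.exists_walk_length_eq_dist (c x) v
  obtain ⟨q, hq⟩ := hconn.exists_walk_length_eq_dist v x
  have hpq : (p.append q).length = G.dist (c x) x := by
    rw [Walk.length_append, hp, hq, mem_geodesicShadow.1 hxv]
  refine ⟨x, rfl, ⟨y, hxy, hy⟩, p.append q, fun z hz => ?_, fun q' _ => ?_, ?_⟩
  · exact hc.eq_of_mem_geodesicShadow hconn (dist_add_dist_of_mem_support hpq hz)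
  · exact hpq ▸ SimpleGraph.dist_le q'
  · exact (Walk.mem_support_append_iff _ _).2 (.inl p.end_mem_support)

theorem IsVoronoiCovering.eq_of_mem_geodesicShadow_of_notMem_boundaryTree
    (hc : IsVoronoiCovering G M c) (hconn : G.Connected) (hv : v ∉ boundaryTree G c (c v))
    (hx : x ∈ geodesicShadow G (c v) v) : c x = c v := by
  by_contra hne
  obtain ⟨p, hp⟩ := hconn.exists_walk_length_eq_dist v x
  obtain ⟨d, hd, hfst, hsnd⟩ := p.exists_boundary_dart (c ⁻¹' {c v}) rfl hne
  have hfstv : d.fst ∈ geodesicShadow G (c v) v := mem_geodesicShadow_of_mem_of_mem hconn hx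
    (dist_add_dist_of_mem_support hp (p.dart_fst_mem_support_of_mem_darts hd))
  rw [Set.mem_preimage, Set.mem_singleton_iff] at hfst hsnd
  rw [← hfst] at hv hsnd hfstv
  exact hv (hc.mem_boundaryTree_of_adj hconn hfstv d.adj hsnd)

theorem stmt13_general (hconn : G.Connected) (hgirth : ((2 * r + 2 : ℕ) : ℕ∞) ≤ G.egirth)
    (hdom : IsDistDomSet G r M) (hnosingle : ∀ x, ¬ IsDistDomSet G r {x})
    (hc : IsVoronoiCovering G M c)
    (hmax : ∀ w, G.Adj v w → ¬ G.ball v (r + 1) ⊂ G.ball w (r + 1)) :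
    v ∈ boundaryTree G c (c v) := by
  by_contra hv
  have hfar (t : V) : ∃ x, r < G.dist t x := by
    simpa only [isDistDomSet_singleton_iff hconn, not_forall, not_le] using hnosingle t
  have hS : ∀ x ∈ geodesicShadow G (c v) v, G.dist (c v) x ≤ r := fun x hx =>
    hc.eq_of_mem_geodesicShadow_of_notMem_boundaryTree hconn hv hx ▸ hc.dist_le hdom x
  have hne : c v ≠ v := fun h => by
    obtain ⟨x, hx⟩ := hfar (c v)
    exact (hS x (by simp only [h, geodesicShadow_self, Set.mem_univ])).not_gt hx
  obtain ⟨t, hvt, ht⟩ := exists_adj_dist_add_one_eq (hconn (c v) v) hne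
  exact hmax t hvt (ball_ssubset_ball_of_geodesicShadow hconn hgirth hS hvt ht (hfar t))

end Voronoi

/-- Suppose `G` is connected with girth at least `4r+3`, `M` is a distance-`r`
dominating set, no single vertex dominates all of `G`, and `c` is the covering map.
If `u` and `v` lie in the Voronoi cell of `m` with `dist u v ≤ r`, and `v`
lexicographically maximizes `(|N^r(w)|, w)` over all `w ∈ N^r[u]`, then `v` lies
on some shortest path, inside the subgraph induced by the cell, from `m` to a
vertex of the cell having a neighbor outside the cell. -/
theorem stmt13 {V : Type*} [Fintype V] [LinearOrder V] (G : SimpleGraph V)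
    (hconn : G.Connected) (r : ℕ) (hr : 1 ≤ r)
    (hgirth : ((4 * r + 3 : ℕ) : ℕ∞) ≤ G.egirth)
    (M : Set V) (hdom : IsDistDomSet G r M)
    (hnosingle : ∀ x : V, ¬ IsDistDomSet G r {x})
    (c : V → V) (hc : IsVoronoiCovering G M c)
    (m u v : V) (hu : c u = m) (hv : c v = m) (huv : G.dist u v ≤ r)
    (hmax : ∀ w : V, G.dist u w ≤ r →
      ({x : V | G.dist x w ≤ r ∧ x ≠ w}.ncard < {x : V | G.dist x v ≤ r ∧ x ≠ v}.ncard ∨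
       ({x : V | G.dist x w ≤ r ∧ x ≠ w}.ncard = {x : V | G.dist x v ≤ r ∧ x ≠ v}.ncard ∧
        w ≤ v))) :
    ∃ (u' : V), c u' = m ∧ (∃ y : V, G.Adj u' y ∧ c y ≠ m) ∧
      ∃ p : G.Walk m u',
        (∀ x ∈ p.support, c x = m) ∧
        (∀ q : G.Walk m u', (∀ x ∈ q.support, c x = m) → p.length ≤ q.length) ∧
        v ∈ p.support := by
  subst hv
  exact stmt13_general hconn (le_trans (by norm_cast; omega) hgirth) hdom hnosingle hc fun w _ =>
    not_ball_ssubset_of_forall_ncard_le hconn huv (fun z hz => (hmax z hz).elim le_of_lt (·.1.le)) w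
end

section
/- Let G be a finite simple graph whose vertex set carries a linear order, let r ∈ ℕ, let M be a distance-r dominating set of G with covering map c and Voronoi cells H_m. For m ∈ M let T_m ⊆ H_m be the union, over all edges {u,v} of G with c(u) = m and c(v) ≠ m, of the vertex sets of shortest paths inside the subgraph induced by H_m from u to m, and let T = ⋃_{m ∈ M} T_m. Let E' be the set of edges of G whose two endpoints lie in distinct Voronoi cells. Then |T| ≤ |M| + 2r·|E'|. -/
open SimpleGraph

/-!
Along a geodesic from `u` to its centre `c u`, no vertex can prefer another centre, as rerouting
would give `u` a better centre too. Hence geodesics to the centre stay in the cell, and a shortest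
path inside the cell has length `dist u (c u) ≤ r`. Apart from its last vertex, which lies in `M`,
such a path contributes at most `r` vertices to `T`. There is one path for each vertex on the
boundary of a cell, and every such vertex is one of the two endpoints of an edge in `E'`.
-/

lemma encard_iUnion_le_card_mul {ι α : Type*} {f : ι → Set α} {n : ℕ∞}
    (hf : ∀ i, (f i).encard ≤ n) : (⋃ i, f i).encard ≤ ENat.card ι * n := by
  cases finite_or_infinite ι with
  | inl _ =>
    have := Fintype.ofFinite ι
    calc (⋃ i, f i).encard ≤ ∑ i, (f i).encard := Set.encard_iUnion_le_of_fintype f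
      _ ≤ ∑ _i : ι, n := Finset.sum_le_sum fun i _ ↦ hf i
      _ = ENat.card ι * n := by simp
  | inr _ =>
    obtain rfl | hn := eq_or_ne n 0
    · have hempty : ∀ i, f i = ∅ := fun i ↦ Set.encard_eq_zero.1 (nonpos_iff_eq_zero.1 (hf i))
      simp [hempty]
    · simp [ENat.top_mul hn]

section Walks

variable {V : Type*} {G : SimpleGraph V}

lemma dist_add_dist_le_length {u v x : V} (p : G.Walk u v) (hx : x ∈ p.support) :
    G.dist u x + G.dist x v ≤ p.length := by
  classical
  calc G.dist u x + G.dist x v ≤ (p.takeUntil x hx).length + (p.dropUntil x hx).length :=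
        add_le_add (dist_le _) (dist_le _)
    _ = p.length := by rw [← Walk.length_append, Walk.take_spec]

lemma encard_support_diff_end_le_length {u v : V} (p : G.Walk u v) :
    ({x | x ∈ p.support} \ {v}).encard ≤ p.length := by
  induction p with
  | nil => simp
  | @cons u _ v _ p ih =>
    calc ({x | x ∈ (Walk.cons _ p).support} \ {v}).encard
        ≤ (insert u ({x | x ∈ p.support} \ {v})).encard :=
          Set.encard_le_encard fun _ hx ↦ (List.mem_cons.1 hx.1).imp_right (⟨·, hx.2⟩)
      _ ≤ ({x | x ∈ p.support} \ {v}).encard + 1 := Set.encard_insert_le _ _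
      _ ≤ (Walk.cons _ p).length := by simpa using add_le_add_left ih 1

lemma encard_iUnion_support_le {ι : Type*} {a b : ι → V} {M : Set V} {r : ℕ}
    (p : ∀ i, G.Walk (a i) (b i)) (hb : ∀ i, b i ∈ M) (hp : ∀ i, (p i).length ≤ r) :
    (⋃ i, {x | x ∈ (p i).support}).encard ≤ M.encard + ENat.card ι * r := by
  have hsub : ⋃ i, {x | x ∈ (p i).support} ⊆ M ∪ ⋃ i, {x | x ∈ (p i).support} \ {b i} := by
    refine Set.iUnion_subset fun i x hx ↦ ?_
    obtain rfl | hne := eq_or_ne x (b i)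
    · exact .inl (hb i)
    · exact .inr (Set.mem_iUnion.2 ⟨i, hx, hne⟩)
  have hcard (i : ι) : ({x | x ∈ (p i).support} \ {b i}).encard ≤ r :=
    (encard_support_diff_end_le_length (p i)).trans (by exact_mod_cast hp i)
  calc (⋃ i, {x | x ∈ (p i).support}).encard
      ≤ M.encard + (⋃ i, {x | x ∈ (p i).support} \ {b i}).encard :=
        (Set.encard_le_encard hsub).trans (Set.encard_union_le _ _)
    _ ≤ M.encard + ENat.card ι * r := by gcongr; exact encard_iUnion_le_card_mul hcard

end Walks

section Cells

variable {V α : Type*}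

/-- The union of the boundaries of the cells `{x | c x = m}`: the vertices with a neighbour in
another cell. -/
def cellBoundary (G : SimpleGraph V) (c : V → α) : Set V :=
  {u | ∃ y, G.Adj u y ∧ c y ≠ c u}

/-- The edges of `G` joining two distinct cells `{x | c x = m}`; this is the set `E'` of the
theorem. -/
def interCellEdges (G : SimpleGraph V) (c : V → α) : Set (Sym2 V) :=
  {e | ∃ x y, G.Adj x y ∧ c x ≠ c y ∧ e = s(x, y)}

lemma encard_cellBoundary_le (G : SimpleGraph V) (c : V → α) :
    (cellBoundary G c).encard ≤ (interCellEdges G c).encard * 2 := by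
  have hsub : cellBoundary G c ⊆ ⋃ e : interCellEdges G c, (e : Set V) := by
    rintro u ⟨y, hadj, hne⟩
    exact Set.mem_iUnion.2 ⟨⟨s(u, y), u, y, hadj, hne.symm, rfl⟩, Sym2.mem_mk_left u y⟩
  have hcard (e : Sym2 V) : (e : Set V).encard ≤ 2 := by
    induction e with
    | _ x y =>
      calc (s(x, y) : Set V).encard = (insert x {y} : Set V).encard := by rw [Sym2.coe_mk]
        _ ≤ ({y} : Set V).encard + 1 := Set.encard_insert_le _ _
        _ = 2 := by rw [Set.encard_singleton, one_add_one_eq_two]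
  exact (Set.encard_le_encard hsub).trans (encard_iUnion_le_card_mul fun e ↦ hcard e)

end Cells

namespace IsVoronoiCovering

variable {V : Type*} [LinearOrder V] {G : SimpleGraph V} {M : Set V} {c : V → V}

lemma dist_le_of_isDistDomSet {r : ℕ} (hc : IsVoronoiCovering G M c)
    (hdom : IsDistDomSet G r M) (v : V) :
    G.dist v (c v) ≤ r := by
  obtain ⟨m, hm, p, hp⟩ := hdom v
  have hle : G.dist v (c v) ≤ G.dist v m :=
    ((hc v).2.2 m hm ⟨p⟩).elim le_of_lt fun h ↦ h.1.le
  exact hle.trans ((SimpleGraph.dist_le p).trans hp)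

lemma eq_of_dist_add_dist_le (hc : IsVoronoiCovering G M c) {u x : V} (hux : G.Reachable u x)
    (hx : G.dist u x + G.dist x (c u) ≤ G.dist u (c u)) : c x = c u := by
  obtain ⟨huM, hu, hu_min⟩ := hc u
  obtain ⟨hxM, hxr, hx_min⟩ := hc x
  have htri : G.dist u (c x) ≤ G.dist u x + G.dist x (c x) := hux.dist_triangle_left _
  obtain hlt | ⟨heq, hle⟩ := hx_min (c u) huM (hux.symm.trans hu)
  · obtain hlt' | ⟨heq', -⟩ := hu_min (c x) hxM (hux.trans hxr) <;> omega
  · obtain hlt' | ⟨-, hle'⟩ := hu_min (c x) hxM (hux.trans hxr)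
    · omega
    · exact le_antisymm hle hle'

lemma exists_geodesic_in_cell (hc : IsVoronoiCovering G M c) (u : V) :
    ∃ q : G.Walk u (c u), q.length = G.dist u (c u) ∧ ∀ x ∈ q.support, c x = c u := by
  classical
  obtain ⟨q, hq⟩ := (hc u).2.1.exists_walk_length_eq_dist
  exact ⟨q, hq, fun x hx ↦ hc.eq_of_dist_add_dist_le (q.takeUntil x hx).reachable
    ((dist_add_dist_le_length q hx).trans hq.le)⟩

end IsVoronoiCovering

theorem stmt14_general {V : Type*} [LinearOrder V] (G : SimpleGraph V)
    (r : ℕ) (M : Set V) (hdom : IsDistDomSet G r M)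
    (c : V → V) (hc : IsVoronoiCovering G M c)
    (P : ∀ u m : V, c u = m → (∃ y : V, G.Adj u y ∧ c y ≠ m) → G.Walk u m)
    (hP : ∀ (u m : V) (h1 : c u = m) (h2 : ∃ y : V, G.Adj u y ∧ c y ≠ m),
      (∀ x ∈ (P u m h1 h2).support, c x = m) ∧
      (∀ q : G.Walk u m, (∀ x ∈ q.support, c x = m) →
        (P u m h1 h2).length ≤ q.length))
    (T : Set V)
    (hT : T = {x : V | ∃ (m : V) (_ : m ∈ M) (u : V) (h1 : c u = m)
      (h2 : ∃ y : V, G.Adj u y ∧ c y ≠ m), x ∈ (P u m h1 h2).support})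
    (E' : Set (Sym2 V))
    (hE' : E' = {e : Sym2 V | ∃ x y : V, G.Adj x y ∧ c x ≠ c y ∧ e = s(x, y)}) :
    T.encard ≤ M.encard + 2 * r * E'.encard := by
  have hlen (u : cellBoundary G c) : (P u (c u) rfl u.2).length ≤ r := by
    obtain ⟨q, hq, hcell⟩ := hc.exists_geodesic_in_cell u
    exact ((hP u (c u) rfl u.2).2 q hcell).trans (hq.trans_le (hc.dist_le_of_isDistDomSet hdom u))
  have hsub : T ⊆ ⋃ u : cellBoundary G c, {x | x ∈ (P u (c u) rfl u.2).support} := by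
    rw [hT]
    rintro x ⟨_, -, u, rfl, hu, hx⟩
    exact Set.mem_iUnion.2 ⟨⟨u, hu⟩, hx⟩
  have hE : (cellBoundary G c).encard ≤ E'.encard * 2 := hE' ▸ encard_cellBoundary_le G c
  calc T.encard ≤ M.encard + (cellBoundary G c).encard * r :=
        (Set.encard_le_encard hsub).trans
          (encard_iUnion_support_le _ (fun u ↦ (hc u).1) hlen)
    _ ≤ M.encard + E'.encard * 2 * r := by gcongr
    _ = M.encard + 2 * r * E'.encard := by ring

/-- Let `M` be a distance-`r` dominating set with covering map `c` and Voronoi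
cells `H_m = {x | c x = m}`.  For each vertex `u` of a cell `H_m` that is the
endpoint of an edge leaving the cell, let `P u m …` be a designated shortest path
from `u` to `m` inside the subgraph induced by `H_m`; let `T` be the union of the
vertex sets of all these paths, and let `E'` be the set of edges of `G` whose
endpoints lie in distinct Voronoi cells.  Then `|T| ≤ |M| + 2r·|E'|`. -/
theorem stmt14 {V : Type*} [Fintype V] [LinearOrder V] (G : SimpleGraph V)
    (r : ℕ) (M : Set V) (hdom : IsDistDomSet G r M)
    (c : V → V) (hc : IsVoronoiCovering G M c)
    (P : ∀ u m : V, c u = m → (∃ y : V, G.Adj u y ∧ c y ≠ m) → G.Walk u m)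
    (hP : ∀ (u m : V) (h1 : c u = m) (h2 : ∃ y : V, G.Adj u y ∧ c y ≠ m),
      (∀ x ∈ (P u m h1 h2).support, c x = m) ∧
      (∀ q : G.Walk u m, (∀ x ∈ q.support, c x = m) →
        (P u m h1 h2).length ≤ q.length))
    (T : Set V)
    (hT : T = {x : V | ∃ (m : V) (_ : m ∈ M) (u : V) (h1 : c u = m)
      (h2 : ∃ y : V, G.Adj u y ∧ c y ≠ m), x ∈ (P u m h1 h2).support})
    (E' : Set (Sym2 V))
    (hE' : E' = {e : Sym2 V | ∃ x y : V, G.Adj x y ∧ c x ≠ c y ∧ e = s(x, y)}) :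
    T.ncard ≤ M.ncard + 2 * r * E'.ncard := by
  rw [← Nat.cast_le (α := ℕ∞)]
  simpa [(Set.toFinite _).cast_ncard_eq] using stmt14_general G r M hdom c hc P hP T hT E' hE'
end
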